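/- Fix p ∈ {1,…,7} and an ordered partition of {1,…,7}\{p} into an input triple (i₁,i₂,i₃) and an output triple (o₁,o₂,o₃), and set A := A^{(p)}[(i₁,i₂,i₃)→(o₁,o₂,o₃)]. For each edge {a,b} ⊆ {1,…,7}\{p}, consider the restriction vector r_{ab} := (e_{ab}(u_{i₁}^p), e_{ab}(u_{i₂}^p), e_{ab}(u_{i₃}^p), e_{ab}(u_{o₁}^p), e_{ab}(u_{o₂}^p), e_{ab}(u_{o₃}^p)) ∈ F⁶. Then the F-span of the vectors r_{ab} over all such edges is exactly the 3-dimensional subspace {(v, v·A) : v ∈ F³} ⊆ F⁶ (the graph of the linear map defined by A); in particular, the restrictions of the edge vectors to one 5-simplex span the whole 3-dimensional space of its permitted colorings. -/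

import Mathlib

/-- The determinant `d_{ijk}` built from the columns `(α_i,β_i,γ_i)`, `(α_j,β_j,γ_j)`,
`(α_k,β_k,γ_k)`. -/
noncomputable def dd {F : Type*} [Field F] (al be ga : Fin 7 → F) (i j k : Fin 7) : F :=
  Matrix.det !![al i, al j, al k; be i, be j, be k; ga i, ga j, ga k]

/-- The ansatz matrix `A^{(p)}[(i₁,i₂,i₃)→(o₁,o₂,o₃)]`. -/
noncomputable def ansatz {F : Type*} [Field F] (al be ga : Fin 7 → F) (p : Fin 7)
    (inp out : Fin 3 → Fin 7) : Matrix (Fin 3) (Fin 3) F := fun a b =>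
  dd al be ga (inp (a + 1)) (out b) p * dd al be ga (inp (a + 2)) (out b) p /
    (dd al be ga (inp a) (inp (a + 1)) p * dd al be ga (inp a) (inp (a + 2)) p)

/-- The edge vector `e_{ab}` evaluated at a subset `u ⊆ {1,…,7}`. -/
noncomputable def eVec {F : Type*} [Field F] (al be ga : Fin 7 → F) (a b : Fin 7)
    (u : Finset (Fin 7)) : F :=
  if a ∈ u ∧ b ∈ u then
    dd al be ga a ((uᶜ.sort (· ≤ ·)).getD 0 a) ((uᶜ.sort (· ≤ ·)).getD 1 a) *
      dd al be ga b ((uᶜ.sort (· ≤ ·)).getD 0 a) ((uᶜ.sort (· ≤ ·)).getD 1 a)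
  else 0

/-- `u_q^p := {1,…,7} \ {p,q}`. -/
def uComp (p q : Fin 7) : Finset (Fin 7) := ({p, q} : Finset (Fin 7))ᶜ

/-!
Projecting from the point `p` turns `ω x y = d_{xyp}` into an alternating bracket satisfying the
three-term Grassmann–Plücker relation, and `e_{ab}(u_q^p) = ω a q * ω b q`. For fixed `a` and `b`
this is a binary quadratic form in `q`, hence determined by its values at the three nodes
`i₁, i₂, i₃`; the matrix `A` is Lagrange interpolation from these nodes to `o₁, o₂, o₃`, so every
restriction vector lies on the graph of `A`. The edge joining two of the nodes vanishes at both of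
them and not at the third, so the three input edges already give a basis of the graph.
-/

/-- A rank two Grassmann–Plücker function: an alternating bracket on `ι` with the three-term
relation obeyed by the `2 × 2` minors of a matrix with two rows. Nonvanishing is not required. -/
structure IsGrassmannPlucker {ι R : Type*} [CommRing R] (ω : ι → ι → R) : Prop where
  self (x : ι) : ω x x = 0
  swap (x y : ι) : ω x y = -ω y x
  plucker (x y z w : ι) : ω x y * ω z w - ω x z * ω y w + ω x w * ω y z = 0

/-- The values at the points `x k` of the binary quadratic form `q ↦ ω a q * ω b q`, which
vanishes at `a` and `b`. -/
def bracketProducts {ι κ R : Type*} [CommRing R] (ω : ι → ι → R) (x : κ → ι) (a b : ι) : κ → R :=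
  fun k => ω a (x k) * ω b (x k)

/-- The matrix of Lagrange interpolation of binary quadratic forms from the three nodes `inp` to
the points `out`. Row `a` holds the values of the form that is `1` at `inp a` and `0` at the other
two nodes, whose indices are `a + 1` and `a + 2` modulo `3`. -/
def interpolationMatrix {ι κ K : Type*} [Field K] (ω : ι → ι → K) (inp : Fin 3 → ι)
    (out : κ → ι) : Matrix (Fin 3) κ K := fun a b =>
  ω (inp (a + 1)) (out b) * ω (inp (a + 2)) (out b) /
    (ω (inp a) (inp (a + 1)) * ω (inp a) (inp (a + 2)))

namespace IsGrassmannPlucker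

section CommRing

variable {ι R : Type*} [CommRing R] {ω : ι → ι → R}

theorem mul_eq_sub (hω : IsGrassmannPlucker ω) (x o y z : ι) :
    ω y z * ω x o = ω x z * ω y o - ω x y * ω z o := by
  linear_combination hω.plucker x o y z + ω x y * hω.swap o z - ω x z * hω.swap o y

theorem interpolation_mul_eq (hω : IsGrassmannPlucker ω) (a b o i j k : ι) :
    ω i j * ω i k * ω j k * (ω a o * ω b o) =
      ω j k * (ω a i * ω b i) * (ω j o * ω k o) - ω i k * (ω a j * ω b j) * (ω k o * ω i o) +
        ω i j * (ω a k * ω b k) * (ω i o * ω j o) := by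
  linear_combination ω i k * ω j k * ω b o * hω.mul_eq_sub a o i j -
    ω j k * ω a i * ω j o * hω.mul_eq_sub b o i k +
    ω i k * ω a j * ω i o * hω.mul_eq_sub b o j k -
    ω b k * ω i o * ω j o * hω.mul_eq_sub a k i j

theorem bracketProducts_nodes (hω : IsGrassmannPlucker ω) (inp : Fin 3 → ι) (k : Fin 3) :
    bracketProducts ω inp (inp (k + 1)) (inp (k + 2)) =
      Pi.single k (ω (inp (k + 1)) (inp k) * ω (inp (k + 2)) (inp k)) := by
  ext j
  have hj : j = k ∨ j = k + 1 ∨ j = k + 2 := by decide +revert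
  rcases hj with rfl | rfl | rfl <;> simp [bracketProducts, hω.self]

end CommRing

section Field

variable {ι K : Type*} [Field K] {ω : ι → ι → K} {inp : Fin 3 → ι}

theorem vecMul_interpolationMatrix {κ : Type*} (hω : IsGrassmannPlucker ω)
    (hinp : Pairwise fun j k => ω (inp j) (inp k) ≠ 0) (out : κ → ι) (a b : ι) :
    Matrix.vecMul (bracketProducts ω inp a b) (interpolationMatrix ω inp out) =
      bracketProducts ω out a b := by
  ext n
  have h01 : ω (inp 0) (inp 1) ≠ 0 := hinp (by decide)
  have h02 : ω (inp 0) (inp 2) ≠ 0 := hinp (by decide)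
  have h12 : ω (inp 1) (inp 2) ≠ 0 := hinp (by decide)
  simp only [Matrix.vecMul, dotProduct, Fin.sum_univ_three, bracketProducts, interpolationMatrix,
    Fin.reduceAdd, zero_add]
  rw [hω.swap (inp 1) (inp 0), hω.swap (inp 2) (inp 0), hω.swap (inp 2) (inp 1)]
  field_simp
  linear_combination -hω.interpolation_mul_eq a b (out n) (inp 0) (inp 1) (inp 2)

theorem span_bracketProducts_nodes (hω : IsGrassmannPlucker ω)
    (hinp : Pairwise fun j k => ω (inp j) (inp k) ≠ 0) :
    Submodule.span K
      (Set.range fun k => bracketProducts ω inp (inp (k + 1)) (inp (k + 2))) = ⊤ := by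
  have hunit (k : Fin 3) : IsUnit (ω (inp (k + 1)) (inp k) * ω (inp (k + 2)) (inp k)) :=
    (mul_ne_zero (hinp (by simp)) (hinp (by simp))).isUnit
  convert ((Pi.basisFun K (Fin 3)).isUnitSMul hunit).span_eq using 3
  ext1 k
  rw [hω.bracketProducts_nodes, Module.Basis.isUnitSMul_apply, Pi.basisFun_apply,
    ← Pi.single_smul, smul_eq_mul, mul_one]

end Field

end IsGrassmannPlucker

/-- The linear map `v ↦ (v, v·A)`, whose range is the graph of right multiplication by `A`. -/
def appendVecMul {R : Type*} [CommSemiring R] {m n : ℕ} (A : Matrix (Fin m) (Fin n) R) :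
    (Fin m → R) →ₗ[R] (Fin (m + n) → R) :=
  LinearMap.funLeft R R finSumFinEquiv.symm ∘ₗ (Matrix.fromCols 1 A).vecMulLinear

theorem appendVecMul_apply {R : Type*} [CommSemiring R] {m n : ℕ} (A : Matrix (Fin m) (Fin n) R)
    (v : Fin m → R) : appendVecMul A v = Fin.append v (Matrix.vecMul v A) := by
  ext i
  induction i using Fin.addCases <;>
    simp [appendVecMul, LinearMap.funLeft, Matrix.vecMul_fromCols, -Fin.natAdd_eq_addNat]

theorem append_eq_dite {α : Type*} {m n : ℕ} (f : Fin m → α) (g : Fin n → α) :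
    Fin.append f g = fun i : Fin (m + n) =>
      if h : (i : ℕ) < m then f ⟨i, h⟩ else g ⟨(i : ℕ) - m, by omega⟩ := by
  ext i
  induction i using Fin.addCases <;> simp [-Fin.natAdd_eq_addNat]

section Determinants

variable {F : Type*} [Field F] (al be ga : Fin 7 → F)

theorem dd_eq (i j k : Fin 7) : dd al be ga i j k =
    al i * be j * ga k - al i * be k * ga j - al j * be i * ga k + al j * be k * ga i +
      al k * be i * ga j - al k * be j * ga i :=
  Matrix.det_fin_three _

theorem dd_self_left (i k : Fin 7) : dd al be ga i i k = 0 :=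
  Matrix.det_zero_of_column_eq (i := 0) (j := 1) (by decide) (by simp)

theorem dd_swap_left (i j k : Fin 7) : dd al be ga i j k = -dd al be ga j i k := by
  rw [dd_eq, dd_eq]
  ring

theorem dd_swap_right (i j k : Fin 7) : dd al be ga i j k = -dd al be ga i k j := by
  rw [dd_eq, dd_eq]
  ring

theorem dd_self_outer (i j : Fin 7) : dd al be ga i j i = 0 := by
  rw [dd_swap_right, dd_self_left, neg_zero]

theorem dd_self_right (i j : Fin 7) : dd al be ga i j j = 0 := by
  rw [dd_swap_left, dd_self_outer, neg_zero]

theorem isGrassmannPlucker_dd (p : Fin 7) : IsGrassmannPlucker fun x y => dd al be ga x y p where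
  self x := dd_self_left al be ga x p
  swap x y := dd_swap_left al be ga x y p
  plucker x y z w := by
    simp only [dd_eq]
    ring

theorem ansatz_eq_interpolationMatrix (p : Fin 7) (inp out : Fin 3 → Fin 7) :
    ansatz al be ga p inp out = interpolationMatrix (fun x y => dd al be ga x y p) inp out :=
  rfl

theorem uComp_comm (p q : Fin 7) : uComp p q = uComp q p := by
  rw [uComp, uComp, Finset.pair_comm]

theorem sort_pair_of_lt {α : Type*} [LinearOrder α] {s t : α} (hst : s < t) :
    ({s, t} : Finset α).sort (· ≤ ·) = [s, t] := by
  rw [Finset.sort_insert _ (by simpa using hst.le) (by simpa using hst.ne),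
    Finset.sort_singleton]

theorem eVec_uComp_of_lt (a b : Fin 7) {s t : Fin 7} (hst : s < t) :
    eVec al be ga a b (uComp s t) = dd al be ga a t s * dd al be ga b t s := by
  rw [dd_swap_right al be ga a, dd_swap_right al be ga b, neg_mul_neg, eVec,
    show (uComp s t)ᶜ = {s, t} from compl_compl _, sort_pair_of_lt hst]
  refine ite_eq_left_iff.2 fun hab => ?_
  have hmem : (a = s ∨ a = t) ∨ b = s ∨ b = t := by
    simp only [uComp, Finset.mem_compl, Finset.mem_insert, Finset.mem_singleton] at hab
    tauto
  rcases hmem with (rfl | rfl) | rfl | rfl <;> simp [dd_self_left, dd_self_outer]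

theorem eVec_uComp (a b : Fin 7) {p q : Fin 7} (hpq : p ≠ q) :
    eVec al be ga a b (uComp p q) = dd al be ga a q p * dd al be ga b q p := by
  rcases hpq.lt_or_gt with h | h
  · exact eVec_uComp_of_lt al be ga a b h
  · rw [uComp_comm, eVec_uComp_of_lt al be ga a b h, dd_swap_right al be ga a,
      dd_swap_right al be ga b, neg_mul_neg]

/-- The restriction `r_{ab} ∈ F⁶` of the edge vector `e_{ab}` to the six sets `u_q^p`, the input
coordinates preceding the output coordinates. -/
noncomputable def restrictionVector (p : Fin 7) (inp out : Fin 3 → Fin 7) (a b : Fin 7) :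
    Fin 6 → F :=
  Fin.append (fun k => eVec al be ga a b (uComp p (inp k)))
    fun k => eVec al be ga a b (uComp p (out k))

variable {al be ga}

theorem ne_of_dd_ne_zero {i j k : Fin 7} (h : dd al be ga i j k ≠ 0) : i ≠ j ∧ i ≠ k ∧ j ≠ k := by
  refine ⟨?_, ?_, ?_⟩ <;> rintro rfl
  · exact h (dd_self_left al be ga i k)
  · exact h (dd_self_outer al be ga i j)
  · exact h (dd_self_right al be ga i j)

variable {p : Fin 7} {inp out : Fin 3 → Fin 7}

theorem restrictionVector_eq_appendVecMul
    (hinp : Pairwise fun j k => dd al be ga (inp j) (inp k) p ≠ 0) (hout : ∀ k, out k ≠ p)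
    (a b : Fin 7) :
    restrictionVector al be ga p inp out a b =
      appendVecMul (ansatz al be ga p inp out)
        (bracketProducts (fun x y => dd al be ga x y p) inp a b) := by
  have hinp_ne (k : Fin 3) : inp k ≠ p :=
    (ne_of_dd_ne_zero (hinp (show k ≠ k + 1 by simp))).2.1
  rw [appendVecMul_apply, ansatz_eq_interpolationMatrix,
    (isGrassmannPlucker_dd al be ga p).vecMul_interpolationMatrix hinp]
  simp only [restrictionVector, eVec_uComp al be ga a b (hinp_ne _).symm,
    eVec_uComp al be ga a b (hout _).symm]
  rfl

theorem edgeVector_restrictions_span_graph_general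
    (hinp : Pairwise fun j k => dd al be ga (inp j) (inp k) p ≠ 0) (hout : ∀ k, out k ≠ p) :
    (Submodule.span F {w | ∃ a b : Fin 7, a ≠ b ∧ a ≠ p ∧ b ≠ p ∧
      w = restrictionVector al be ga p inp out a b} : Set (Fin 6 → F)) =
    {w | ∃ v : Fin 3 → F, w = Fin.append v (Matrix.vecMul v (ansatz al be ga p inp out))} := by
  simp_rw [restrictionVector_eq_appendVecMul hinp hout, ← appendVecMul_apply]
  set G := appendVecMul (ansatz al be ga p inp out)
  trans (LinearMap.range G : Set (Fin 6 → F))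
  · refine congrArg _ (le_antisymm (Submodule.span_le.2 ?_) ?_)
    · rintro _ ⟨a, b, -, -, -, rfl⟩
      exact LinearMap.mem_range_self G _
    · rw [LinearMap.range_eq_map,
        ← (isGrassmannPlucker_dd al be ga p).span_bracketProducts_nodes hinp, Submodule.map_span]
      refine Submodule.span_mono ?_
      rintro _ ⟨_, ⟨k, rfl⟩, rfl⟩
      obtain ⟨hab, ha, hb⟩ := ne_of_dd_ne_zero (hinp (show k + 1 ≠ k + 2 by simp))
      exact ⟨inp (k + 1), inp (k + 2), hab, ha, hb, rfl⟩
  · ext w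
    simp [eq_comm]

end Determinants

theorem injective_and_ne_of_partition {p : Fin 7} {inp out : Fin 3 → Fin 7}
    (hpart : ({p, inp 0, inp 1, inp 2, out 0, out 1, out 2} : Finset (Fin 7)) = Finset.univ) :
    Function.Injective inp ∧ (∀ k, inp k ≠ p) ∧ ∀ k, out k ≠ p := by
  set f : Fin 7 → Fin 7 := Fin.cons p (Fin.append inp out)
  have hsurj : Function.Surjective f := by
    intro x
    have hx := hpart ▸ Finset.mem_univ x
    simp only [Finset.mem_insert, Finset.mem_singleton] at hx
    rcases hx with rfl | rfl | rfl | rfl | rfl | rfl | rfl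
    exacts [⟨0, rfl⟩, ⟨1, rfl⟩, ⟨2, rfl⟩, ⟨3, rfl⟩, ⟨4, rfl⟩, ⟨5, rfl⟩, ⟨6, rfl⟩]
  have hf : Function.Injective f := Finite.injective_iff_surjective.2 hsurj
  have hinp (k : Fin 3) : f (Fin.castAdd 3 k).succ = inp k := by simp [f]
  have hout (k : Fin 3) : f (Fin.natAdd 3 k).succ = out k := by
    simp [f, -Fin.natAdd_eq_addNat]
  refine ⟨fun j k hjk => ?_, fun k => ?_, fun k => ?_⟩
  · exact Fin.castAdd_injective 3 3 (Fin.succ_injective _ (hf (by rw [hinp, hinp, hjk])))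
  · exact hinp k ▸ hf.ne (Fin.succ_ne_zero _)
  · exact hout k ▸ hf.ne (Fin.succ_ne_zero _)

/-- The span of the restriction vectors
`r_{ab} = (e_{ab}(u_{i₁}^p), e_{ab}(u_{i₂}^p), e_{ab}(u_{i₃}^p), e_{ab}(u_{o₁}^p),
e_{ab}(u_{o₂}^p), e_{ab}(u_{o₃}^p))`, over all edges `{a,b} ⊆ {1,…,7} \ {p}`, is
exactly the graph `{(v, v·A) : v ∈ F³} ⊆ F⁶` of the ansatz matrix
`A = A^{(p)}[(i₁,i₂,i₃)→(o₁,o₂,o₃)]`. -/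
theorem edgeVector_restrictions_span_graph {F : Type*} [Field F] (al be ga : Fin 7 → F)
    (hgen : ∀ i j k : Fin 7, i ≠ j → i ≠ k → j ≠ k → dd al be ga i j k ≠ 0)
    (p : Fin 7) (inp out : Fin 3 → Fin 7)
    (hpart : ({p, inp 0, inp 1, inp 2, out 0, out 1, out 2} : Finset (Fin 7)) =
      Finset.univ) :
    (Submodule.span F
        {w : Fin 6 → F | ∃ a b : Fin 7, a ≠ b ∧ a ≠ p ∧ b ≠ p ∧
          w = fun n : Fin 6 =>
            if h : (n : ℕ) < 3 then eVec al be ga a b (uComp p (inp ⟨(n : ℕ), h⟩))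
            else eVec al be ga a b
              (uComp p (out ⟨(n : ℕ) - 3, by have := n.isLt; omega⟩))} :
      Set (Fin 6 → F)) =
    {w : Fin 6 → F | ∃ v : Fin 3 → F,
      w = Fin.append v (Matrix.vecMul v (ansatz al be ga p inp out))} := by
  obtain ⟨hinj, hinp, hout⟩ := injective_and_ne_of_partition hpart
  simpa only [restrictionVector, append_eq_dite] using edgeVector_restrictions_span_graph_general
    (fun j k hjk => hgen _ _ _ (hinj.ne hjk) (hinp j) (hinp k)) hout
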